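/- arXiv:1504.03100 — 2 statements merged into one kernel-verified Lean document; each statement's English description precedes it below -/
import Mathlib

section
/- Let α ∈ (0,1), λ > 0 and ν' > 0. Then the Riemann–Liouville fractional integral of order ν' of f^{α,λ} satisfies I^{ν'} f^{α,λ}(x) = λ x^{α+ν'−1} E_{α,α+ν'}(−λ x^α) for x ∈ (0,1]. Moreover, as x → 0+, I^{ν'} f^{α,λ}(x) ∼ (λ/Γ(α+ν')) x^{α+ν'−1}, and if α + ν' ≠ 1 then (I^{ν'} f^{α,λ})'(x) ∼ (λ(α−1+ν')/Γ(α+ν')) x^{α+ν'−2}. -/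
/-!
The fractional integral is computed by integrating the Mittag-Leffler series term by term. Each term
is an Euler integral, `∫ t in 0..x, t ^ (s - 1) * (x - t) ^ (v - 1) = x ^ (s + v - 1) Γ(s) Γ(v) / Γ(s + v)`
(`integral_rpow_mul_sub_rpow`) with `s = α n + α`, so the factor `Γ(α n + α)` in the denominator is
replaced by `Γ(α n + α + v)`. Tonelli justifies the exchange: the integrals of the absolute values of
the terms are, up to a constant factor, the terms of `E_{α, α + v}(lam x ^ α)`, a convergent series.

Convergence of these series for every argument follows from the ratio test and the growth bound
`(s - 1) ^ a Γ(s) ≤ Γ(s + a)`, a consequence of the log-convexity of `Γ`. Hence `E_{a, b}` is an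
entire power series (`mlf_hasFPowerSeries`) with `E_{a, b}(0) = 1 / Γ(b)`, and both asymptotics follow
from the closed form: the quotients equal `Γ(p) E(-lam x ^ α)` and
`Γ(p) E(-lam x ^ α) - c x ^ α E'(-lam x ^ α)` respectively, where `p = α + ν'` and `E = E_{α, p}`,
and `E`, `E'` are continuous at `0`.
-/

open MeasureTheory Filter Set

/-- Mittag-Leffler function `E_{a,b}(z) = ∑ z^n / Γ(a n + b)`. -/
noncomputable def mlf (a b z : ℝ) : ℝ := ∑' n : ℕ, z ^ n / Real.Gamma (a * n + b)

/-- `f^{α,λ}(x) = λ x^{α-1} E_{α,α}(-λ x^α)`. -/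
noncomputable def falpha (a lam x : ℝ) : ℝ := lam * x ^ (a - 1) * mlf a a (-lam * x ^ a)

/-- Hölder regularity `γ` on a set `S`. -/
def HolderOn (f : ℝ → ℝ) (γ : ℝ) (S : Set ℝ) : Prop :=
  ∃ C > 0, ∀ x ∈ S, ∀ y ∈ S, |f x - f y| ≤ C * |x - y| ^ γ

/-- Riemann–Liouville fractional integral of order `v` on `[0,1]`. -/
noncomputable def fracInt (v : ℝ) (f : ℝ → ℝ) (x : ℝ) : ℝ :=
  (1 / Real.Gamma v) * ∫ t in (0:ℝ)..x, f t * (x - t) ^ (v - 1)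

/-- The kernel integral `x ↦ ∫_0^x f(t) (x-t)^{-v} dt` appearing in the
Riemann–Liouville fractional derivative. -/
noncomputable def rlKer (v : ℝ) (f : ℝ → ℝ) (y : ℝ) : ℝ :=
  ∫ t in (0:ℝ)..y, f t * (y - t) ^ (-v)

/-- Riemann–Liouville fractional derivative of order `v` on `[0,1]`
(defined when `rlKer v f` is differentiable). -/
noncomputable def fracDeriv (v : ℝ) (f : ℝ → ℝ) (x : ℝ) : ℝ :=
  (1 / Real.Gamma (1 - v)) * derivWithin (rlKer v f) (Set.Icc 0 1) x

/-- Comparison of the slopes of the convex function `log Γ` on `[s - 1, s]` and `[s, s + a]`. -/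
lemma rpow_mul_Gamma_le {a s : ℝ} (ha : 0 < a) (hs : 1 < s) :
    (s - 1) ^ a * Real.Gamma s ≤ Real.Gamma (s + a) := by
  have h1 : 0 < s - 1 := by linarith
  have h := Real.convexOn_log_Gamma.slope_mono_adjacent (x := s - 1) (y := s) (z := s + a)
    (mem_Ioi.2 h1) (mem_Ioi.2 (by linarith)) (by linarith) (by linarith)
  have hG1 := Real.Gamma_pos_of_pos h1
  have hG2 := Real.Gamma_pos_of_pos (show 0 < s by linarith)
  have hG3 := Real.Gamma_pos_of_pos (show 0 < s + a by linarith)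
  have e : Real.Gamma s = (s - 1) * Real.Gamma (s - 1) := by
    have := Real.Gamma_add_one h1.ne'
    rwa [sub_add_cancel] at this
  have el : Real.log (Real.Gamma s) = Real.log (s - 1) + Real.log (Real.Gamma (s - 1)) := by
    rw [e, Real.log_mul h1.ne' hG1.ne']
  simp only [Function.comp_apply, sub_sub_cancel, div_one, add_sub_cancel_left] at h
  rw [le_div_iff₀ ha] at h
  rw [← Real.log_le_log_iff (by positivity) hG3, Real.log_mul (by positivity) hG2.ne',
    Real.log_rpow h1]
  rw [el] at h ⊢
  linarith

lemma mlf_hasFPowerSeries {a b : ℝ} (ha : 0 < a) (hb : 0 < b) :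
    HasFPowerSeriesOnBall (mlf a b)
      (FormalMultilinearSeries.ofScalars ℝ fun n : ℕ => 1 / Real.Gamma (a * n + b)) 0 ⊤ := by
  set c : ℕ → ℝ := fun n : ℕ => 1 / Real.Gamma (a * n + b) with hc
  have hG : ∀ n : ℕ, 0 < Real.Gamma (a * n + b) := fun n => Real.Gamma_pos_of_pos (by positivity)
  have hcpos : ∀ n, 0 < c n := fun n => one_div_pos.2 (hG n)
  have hlim : Tendsto (fun n : ℕ => a * n + b - 1) atTop atTop := by
    have : Tendsto (fun n : ℕ => a * (n : ℝ)) atTop atTop :=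
      tendsto_natCast_atTop_atTop.const_mul_atTop ha
    simpa [add_sub_assoc] using tendsto_atTop_add_const_right atTop (b - 1) this
  have hrad : (FormalMultilinearSeries.ofScalars ℝ c).radius = ⊤ := by
    refine FormalMultilinearSeries.ofScalars_radius_eq_top_of_tendsto ℝ c
      (Eventually.of_forall fun n => (hcpos n).ne') ?_
    have h0 : Tendsto (fun n : ℕ => (a * n + b - 1) ^ (-a)) atTop (nhds 0) :=
      (tendsto_rpow_neg_atTop ha).comp hlim
    refine squeeze_zero' (Eventually.of_forall fun n => by positivity) ?_ h0
    filter_upwards [hlim.eventually_gt_atTop 0] with n hn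
    rw [Real.norm_of_nonneg (hcpos _).le, Real.norm_of_nonneg (hcpos _).le, Real.rpow_neg hn.le]
    have h := rpow_mul_Gamma_le ha (show 1 < a * n + b by linarith)
    have e : a * ((n.succ : ℕ) : ℝ) + b = a * n + b + a := by push_cast; ring
    have hp : 0 < (a * n + b - 1) ^ a := Real.rpow_pos_of_pos hn _
    have hG' := hG n.succ
    simp only [hc]
    rw [e] at hG' ⊢
    rw [div_div_div_eq, one_mul, mul_one, div_le_iff₀ hG', ← div_eq_inv_mul, le_div_iff₀ hp]
    linarith
  have hs := (FormalMultilinearSeries.ofScalars ℝ c).hasFPowerSeriesOnBall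
    (by rw [hrad]; exact ENNReal.zero_lt_top)
  rw [hrad] at hs
  convert hs using 1
  ext z
  rw [mlf, FormalMultilinearSeries.sum]
  refine tsum_congr fun n => ?_
  rw [FormalMultilinearSeries.ofScalars_apply_eq, hc]
  simp only [smul_eq_mul]
  ring

lemma mlf_analyticAt {a b : ℝ} (ha : 0 < a) (hb : 0 < b) (z : ℝ) : AnalyticAt ℝ (mlf a b) z :=
  (mlf_hasFPowerSeries ha hb).analyticAt_of_mem (by simp)

lemma mlf_summable {a b : ℝ} (ha : 0 < a) (hb : 0 < b) (z : ℝ) :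
    Summable fun n : ℕ => z ^ n / Real.Gamma (a * n + b) := by
  have h := ((mlf_hasFPowerSeries ha hb).hasSum (y := z) (by simp)).summable
  refine h.congr fun n => ?_
  rw [FormalMultilinearSeries.ofScalars_apply_eq]
  simp only [smul_eq_mul]
  ring

lemma mlf_zero (a b : ℝ) : mlf a b 0 = 1 / Real.Gamma b := by
  rw [mlf, tsum_eq_single 0 fun n hn => by simp [hn]]
  simp

/-- Euler's beta integral on `[0, x]`. -/
lemma integral_rpow_mul_sub_rpow {s v x : ℝ} (hs : 0 < s) (hv : 0 < v) (hx : 0 < x) :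
    ∫ t in (0:ℝ)..x, t ^ (s - 1) * (x - t) ^ (v - 1) =
      x ^ (s + v - 1) * (Real.Gamma s * Real.Gamma v / Real.Gamma (s + v)) := by
  have h := Complex.betaIntegral_scaled s v hx
  rw [Complex.betaIntegral_eq_Gamma_mul_div _ _ (by simpa) (by simpa), ← Complex.ofReal_add,
    Complex.Gamma_ofReal, Complex.Gamma_ofReal, Complex.Gamma_ofReal] at h
  have h2 : ∫ t in (0:ℝ)..x, (t : ℂ) ^ ((s : ℂ) - 1) * ((x : ℂ) - t) ^ ((v : ℂ) - 1) =
      ∫ t in (0:ℝ)..x, ((t ^ (s - 1) * (x - t) ^ (v - 1) : ℝ) : ℂ) := by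
    refine intervalIntegral.integral_congr fun t ht => ?_
    rw [uIcc_of_le hx.le] at ht
    rw [Complex.ofReal_mul, Complex.ofReal_cpow ht.1, Complex.ofReal_cpow (sub_nonneg.2 ht.2)]
    push_cast
    rfl
  rw [h2, intervalIntegral.integral_ofReal] at h
  have h3 : (x : ℂ) ^ (((s + v : ℝ) : ℂ) - 1) = ((x ^ (s + v - 1) : ℝ) : ℂ) := by
    rw [Complex.ofReal_cpow hx.le]
    push_cast
    rfl
  rw [h3] at h
  exact_mod_cast h

/-- The closed form holds for every `x > 0`, so it can be differentiated at every such point. -/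
lemma fracInt_falpha_eq {α lam v x : ℝ} (hα : 0 < α) (hlam : 0 < lam) (hv : 0 < v) (hx : 0 < x) :
    fracInt v (falpha α lam) x = lam * x ^ (α + v - 1) * mlf α (α + v) (-lam * x ^ α) := by
  set F : ℕ → ℝ → ℝ := fun n t =>
    lam * (-lam) ^ n / Real.Gamma (α * n + α) * (t ^ (α * n + α - 1) * (x - t) ^ (v - 1)) with hF
  have hs : ∀ n : ℕ, 0 < α * n + α := fun n => by positivity
  have hGs : ∀ n : ℕ, 0 < Real.Gamma (α * n + α) := fun n => Real.Gamma_pos_of_pos (hs n)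
  have hGv : 0 < Real.Gamma v := Real.Gamma_pos_of_pos hv
  have hpow : ∀ n : ℕ, x ^ (α * n + α + v - 1) = x ^ (α + v - 1) * (x ^ α) ^ n := fun n => by
    rw [← Real.rpow_natCast, ← Real.rpow_mul hx.le, ← Real.rpow_add hx]
    ring_nf
  have hint : ∀ n : ℕ, IntervalIntegrable
      (fun t => t ^ (α * n + α - 1) * (x - t) ^ (v - 1)) volume 0 x := fun n => by
    -- Integrability comes for free: the Bochner integral of a non-integrable function is zero.
    refine intervalIntegral.intervalIntegrable_of_integral_ne_zero ?_
    rw [integral_rpow_mul_sub_rpow (hs n) hv hx]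
    have := hGs n
    have : 0 < Real.Gamma (α * n + α + v) := Real.Gamma_pos_of_pos (by linarith [hs n])
    positivity
  have hFint : ∀ n, Integrable (F n) (volume.restrict (Ioc 0 x)) := fun n =>
    ((intervalIntegrable_iff_integrableOn_Ioc_of_le hx.le).1 (hint n)).const_mul _
  have hval : ∀ d : ℝ, ∀ n : ℕ, ∫ t in Ioc 0 x,
      lam * d ^ n / Real.Gamma (α * n + α) * (t ^ (α * n + α - 1) * (x - t) ^ (v - 1)) =
      lam * x ^ (α + v - 1) * Real.Gamma v *
        ((d * x ^ α) ^ n / Real.Gamma (α * n + (α + v))) := fun d n => by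
    rw [integral_const_mul, ← intervalIntegral.integral_of_le hx.le,
      integral_rpow_mul_sub_rpow (hs n) hv hx, hpow, mul_pow, ← add_assoc]
    have := (hGs n).ne'
    field_simp
  have hFsum : Summable fun n => ∫ t in Ioc 0 x, ‖F n t‖ := by
    refine ((mlf_summable hα (add_pos hα hv) (lam * x ^ α)).mul_left
      (lam * x ^ (α + v - 1) * Real.Gamma v)).congr fun n => ?_
    rw [← hval]
    refine setIntegral_congr_fun measurableSet_Ioc fun t ht => ?_
    have h1 : 0 ≤ t ^ (α * n + α - 1) * (x - t) ^ (v - 1) :=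
      mul_nonneg (Real.rpow_nonneg ht.1.le _) (Real.rpow_nonneg (sub_nonneg.2 ht.2) _)
    simp only [hF]
    rw [norm_mul, Real.norm_of_nonneg h1, norm_div, norm_mul, norm_pow, norm_neg,
      Real.norm_of_nonneg hlam.le, Real.norm_of_nonneg (hGs n).le]
  have hkey := (hasSum_integral_of_summable_integral_norm hFint hFsum).tsum_eq
  have hsum : ∫ t in Ioc 0 x, falpha α lam t * (x - t) ^ (v - 1) =
      ∫ t in Ioc 0 x, ∑' n, F n t := by
    refine setIntegral_congr_fun measurableSet_Ioc fun t ht => ?_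
    simp only [falpha, mlf, hF]
    rw [← tsum_mul_left, ← tsum_mul_right]
    refine tsum_congr fun n => ?_
    have e : t ^ (α * n + α - 1) = t ^ (α - 1) * (t ^ α) ^ n := by
      rw [← Real.rpow_natCast, ← Real.rpow_mul ht.1.le, ← Real.rpow_add ht.1]
      ring_nf
    rw [e, mul_pow]
    ring
  rw [fracInt, intervalIntegral.integral_of_le hx.le, hsum, ← hkey, tsum_congr (hval (-lam)),
    tsum_mul_left, mlf]
  field_simp

/-- for `ν' > 0`, the fractional integral of order `ν'` of `f^{α,λ}` is
`λ x^{α+ν'-1} E_{α,α+ν'}(-λ x^α)` on `(0,1]`, with the stated asymptotics of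
`I^{ν'} f^{α,λ}` and (when `α+ν' ≠ 1`) of its derivative as `x → 0+`. -/
theorem fracInt_falpha (α lam ν' : ℝ) (hα : α ∈ Set.Ioo (0:ℝ) 1) (hlam : 0 < lam)
    (hν' : 0 < ν') :
    (∀ x ∈ Set.Ioc (0:ℝ) 1,
      fracInt ν' (falpha α lam) x = lam * x ^ (α + ν' - 1) * mlf α (α + ν') (-lam * x ^ α)) ∧
    Filter.Tendsto
      (fun x => fracInt ν' (falpha α lam) x
        / (lam / Real.Gamma (α + ν') * x ^ (α + ν' - 1)))
      (nhdsWithin 0 (Set.Ioi 0)) (nhds 1) ∧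
    (α + ν' ≠ 1 →
      Filter.Tendsto
        (fun x => deriv (fracInt ν' (falpha α lam)) x
          / (lam * (α - 1 + ν') / Real.Gamma (α + ν') * x ^ (α + ν' - 2)))
        (nhdsWithin 0 (Set.Ioi 0)) (nhds 1)) := by
  have hα0 : 0 < α := hα.1
  have hp : 0 < α + ν' := by linarith
  have hG : 0 < Real.Gamma (α + ν') := Real.Gamma_pos_of_pos hp
  have hformula := fun x (hx : 0 < x) => fracInt_falpha_eq hα0 hlam hν' hx
  have hpow : Tendsto (fun x : ℝ => x ^ α) (nhdsWithin 0 (Ioi 0)) (nhds 0) := by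
    have := (Real.continuousAt_rpow_const 0 α (Or.inr hα0.le)).tendsto
    rw [Real.zero_rpow hα0.ne'] at this
    exact this.mono_left nhdsWithin_le_nhds
  have harg : Tendsto (fun x : ℝ => -lam * x ^ α) (nhdsWithin 0 (Ioi 0)) (nhds 0) := by
    simpa using hpow.const_mul (-lam)
  have han := mlf_analyticAt hα0 hp
  have hE : Tendsto (fun x : ℝ => Real.Gamma (α + ν') * mlf α (α + ν') (-lam * x ^ α))
      (nhdsWithin 0 (Ioi 0)) (nhds 1) := by
    have := (((han 0).continuousAt.tendsto).comp harg).const_mul (Real.Gamma (α + ν'))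
    rwa [mlf_zero, mul_one_div_cancel hG.ne'] at this
  refine ⟨fun x hx => hformula x hx.1, ?_, fun hne => ?_⟩
  · refine hE.congr' ?_
    filter_upwards [self_mem_nhdsWithin] with x hx
    have hx : 0 < x := hx
    rw [hformula x hx]
    have := (Real.rpow_pos_of_pos hx (α + ν' - 1)).ne'
    field_simp
  · have hq : α - 1 + ν' ≠ 0 := fun h => hne (by linarith)
    have hE' : Tendsto (fun x : ℝ => deriv (mlf α (α + ν')) (-lam * x ^ α))
        (nhdsWithin 0 (Ioi 0)) (nhds (deriv (mlf α (α + ν')) 0)) :=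
      (han 0).deriv.continuousAt.tendsto.comp harg
    have hlim := hE.sub ((hpow.mul hE').const_mul
      (Real.Gamma (α + ν') * lam * α / (α - 1 + ν')))
    rw [zero_mul, mul_zero, sub_zero] at hlim
    refine hlim.congr' ?_
    filter_upwards [self_mem_nhdsWithin] with x hx
    have hx : 0 < x := hx
    have hd1 : HasDerivAt (fun y : ℝ => lam * y ^ (α + ν' - 1))
        (lam * ((α + ν' - 1) * x ^ (α + ν' - 1 - 1))) x :=
      (Real.hasDerivAt_rpow_const (Or.inl hx.ne')).const_mul _
    have hd2 : HasDerivAt (fun y : ℝ => -lam * y ^ α) (-lam * (α * x ^ (α - 1))) x :=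
      (Real.hasDerivAt_rpow_const (Or.inl hx.ne')).const_mul _
    have hd3 := (han (-lam * x ^ α)).differentiableAt.hasDerivAt.comp x hd2
    have hd := hd1.mul hd3
    have hev : fracInt ν' (falpha α lam) =ᶠ[nhds x]
        fun y => lam * y ^ (α + ν' - 1) * mlf α (α + ν') (-lam * y ^ α) := by
      filter_upwards [Ioi_mem_nhds hx] with y hy using hformula y hy
    have hdF := (hd.congr_of_eventuallyEq hev).deriv
    have e1 : x ^ (α + ν' - 1) = x ^ (α + ν' - 2) * x := by
      rw [← Real.rpow_add_one hx.ne']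
      ring_nf
    have e2 : x ^ α = x ^ (α - 1) * x := by
      rw [← Real.rpow_add_one hx.ne']
      ring_nf
    have e3 : α + ν' - 1 - 1 = α + ν' - 2 := by ring
    rw [hdF]
    simp only [Function.comp_apply]
    -- Rewriting `x ^ α` below must not touch the arguments of `mlf` and its derivative.
    generalize deriv (mlf α (α + ν')) (-lam * x ^ α) = D
    generalize mlf α (α + ν') (-lam * x ^ α) = M
    rw [e3, e1, e2]
    have := (Real.rpow_pos_of_pos hx (α + ν' - 2)).ne'
    field_simp
    ring
end

section
/- Let α ∈ (0,1), K > 0, λ > 0, δ = K Γ(1−α)/α. Let φ : [0,∞) → [0,∞) be measurable with ∫_0^∞ φ(s) ds = 1, F(x) = ∫_0^x φ(s) ds, and lim_{x→∞} α x^α (1 − F(x)) = K. Let (T_n) be a sequence tending to +∞ and (a_n) ⊂ (0,1) with T_n^α (1 − a_n) → λδ. Set ψ^n = ∑_{k=1}^∞ a_n^k φ^{*k} and ρ^n(x) = T_n ψ^n(T_n x) / ∫_0^∞ ψ^n(s) ds. Then the cumulative functions F^n(t) = ∫_0^t ρ^n(x) dx converge uniformly on [0,1] to F^{α,λ}(t)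 = ∫_0^t f^{α,λ}(x) dx; equivalently, the probability measures with density ρ^n converge weakly to the probability measure with density f^{α,λ}. -/
/-! The proof goes through Laplace transforms. Convolution powers of `φ` have Laplace transform
`(laplace φ z) ^ (k + 1)`, so the resolvent has transform `a L / (1 - a L)` with `L = laplace φ z`,
and total mass `a / (1 - a)`. Hence `ρ^n` has transform `(1 - a_n) L_n / (1 - a_n L_n)` with
`L_n = laplace φ (z / T_n)` (`laplace_rescaled`). The tail hypothesis and dominated convergence
give `T ^ α * (1 - laplace φ (1 / T)) → δ` (`abelian`), so these transforms converge to
`λ / (λ + z ^ α)`, which for `z ^ α > λ` is the transform of `f^{α,λ}` by termwise integration of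
the Mittag-Leffler series (`laplace_falpha`).

It is enough to have this convergence at all large integers `z`. The substitution
`u = exp (-x)` turns the transforms at `z = m, m + 1, …` into the moments on `[0, 1]` of the
densities tilted by `exp (-m x)`, and Weierstrass approximation gives convergence against every
continuous function of `u` (`tendsto_continuous`). Continuous cutoffs then squeeze the cumulative
functions uniformly on `[0, 1]` (`tendstoUniformlyOn_cdf`); only `ρ^n ≥ 0` and the local integrability
of `f^{α,λ}` enter, so neither the sign nor the total mass of `f^{α,λ}` is needed.
-/

open MeasureTheory Filter Set

/-- Causal convolution on `[0,∞)`: `(f ∗ g)(t) = ∫_0^t f(t-s) g(s) ds`. -/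
noncomputable def conv (f g : ℝ → ℝ) (t : ℝ) : ℝ := ∫ s in (0:ℝ)..t, f (t - s) * g s

/-- Iterated convolution: `convPow φ k = φ^{*(k+1)}`, so `convPow φ 0 = φ`. -/
noncomputable def convPow (φ : ℝ → ℝ) : ℕ → ℝ → ℝ
  | 0 => φ
  | (k + 1) => conv (convPow φ k) φ

/-- Laplace transform `f̂(z) = ∫_0^∞ e^{-z t} f(t) dt`. -/
noncomputable def laplace (f : ℝ → ℝ) (z : ℝ) : ℝ :=
  ∫ t in Set.Ioi (0:ℝ), Real.exp (-z * t) * f t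

/-! ### Laplace transforms of convolution powers and of the resolvent -/

/-- Rewrites `conv` as the integrand of Mathlib's `posConvolution`, with `g` in first position,
so that its Fubini theorem applies. -/
lemma conv_eq_posConvolution_integrand (f g : ℝ → ℝ) (x : ℝ) :
    conv f g x = ∫ t in (0:ℝ)..x, (ContinuousLinearMap.mul ℝ ℝ (g t)) (f (x - t)) := by
  simp only [conv, ContinuousLinearMap.mul_apply', mul_comm]

lemma conv_integral {f g : ℝ → ℝ} (hf : IntegrableOn f (Ioi 0)) (hg : IntegrableOn g (Ioi 0)) :
    ∫ x in Ioi (0:ℝ), conv f g x = (∫ x in Ioi (0:ℝ), f x) * ∫ x in Ioi (0:ℝ), g x := by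
  simp_rw [conv_eq_posConvolution_integrand]
  rw [integral_posConvolution hg hf, ContinuousLinearMap.mul_apply', mul_comm]

lemma conv_integrableOn {f g : ℝ → ℝ} (hf : IntegrableOn f (Ioi 0))
    (hg : IntegrableOn g (Ioi 0)) : IntegrableOn (conv f g) (Ioi 0) := by
  have h := integrable_posConvolution (μ := volume) (ν := volume) hg hf
    (ContinuousLinearMap.mul ℝ ℝ)
  refine h.integrableOn.congr_fun (fun x hx => ?_) measurableSet_Ioi
  rw [conv_eq_posConvolution_integrand, posConvolution, indicator_of_mem hx]

lemma convPow_integrableOn {φ : ℝ → ℝ} (hφ : IntegrableOn φ (Ioi 0)) (k : ℕ) :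
    IntegrableOn (convPow φ k) (Ioi 0) := by
  induction k with
  | zero => exact hφ
  | succ k ih => exact conv_integrableOn ih hφ

lemma convPow_integral {φ : ℝ → ℝ} (hφ : IntegrableOn φ (Ioi 0)) (k : ℕ) :
    ∫ x in Ioi (0:ℝ), convPow φ k x = (∫ x in Ioi (0:ℝ), φ x) ^ (k + 1) := by
  induction k with
  | zero => simp [convPow]
  | succ k ih => rw [convPow, conv_integral (convPow_integrableOn hφ k) hφ, ih, pow_succ _ (k + 1)]

lemma convPow_nonneg {φ : ℝ → ℝ} (hφ : ∀ x, 0 ≤ φ x) (k : ℕ) {x : ℝ} (hx : 0 ≤ x) :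
    0 ≤ convPow φ k x := by
  induction k generalizing x with
  | zero => exact hφ x
  | succ k ih =>
    exact intervalIntegral.integral_nonneg hx fun s hs =>
      mul_nonneg (ih (by linarith [hs.2])) (hφ s)

/-- Exponential tilting is multiplicative for causal convolution. -/
lemma exp_mul_conv (z : ℝ) (f g : ℝ → ℝ) (x : ℝ) :
    Real.exp (-z * x) * conv f g x =
      conv (fun y => Real.exp (-z * y) * f y) (fun y => Real.exp (-z * y) * g y) x := by
  rw [conv, conv, ← intervalIntegral.integral_const_mul]
  congr 1 with s
  have : Real.exp (-z * x) = Real.exp (-z * (x - s)) * Real.exp (-z * s) := by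
    rw [← Real.exp_add]; ring_nf
  rw [this]; ring

lemma exp_mul_convPow (z : ℝ) (φ : ℝ → ℝ) (k : ℕ) :
    (fun x => Real.exp (-z * x) * convPow φ k x) =
      convPow (fun y => Real.exp (-z * y) * φ y) k := by
  induction k with
  | zero => rfl
  | succ k ih =>
    funext x
    simp only [convPow]
    rw [exp_mul_conv, ih]

lemma integrableOn_exp_mul {φ : ℝ → ℝ} (hφ : IntegrableOn φ (Ioi 0)) {z : ℝ} (hz : 0 ≤ z) :
    IntegrableOn (fun x => Real.exp (-z * x) * φ x) (Ioi 0) := by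
  refine Integrable.bdd_mul (c := 1) hφ (by fun_prop) ?_
  filter_upwards [ae_restrict_mem measurableSet_Ioi] with x hx
  rw [Real.norm_eq_abs, Real.abs_exp, Real.exp_le_one_iff]
  have := mul_nonneg hz (le_of_lt (mem_Ioi.1 hx)); linarith

lemma laplace_nonneg {φ : ℝ → ℝ} (hpos : ∀ x, 0 ≤ φ x) (z : ℝ) : 0 ≤ laplace φ z :=
  integral_nonneg fun x => mul_nonneg (Real.exp_pos _).le (hpos x)

lemma laplace_le_one {φ : ℝ → ℝ} (hpos : ∀ x, 0 ≤ φ x)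
    (hnorm : (∫ s in Ioi (0:ℝ), φ s) = 1) {z : ℝ} (hz : 0 ≤ z) : laplace φ z ≤ 1 := by
  -- A function with nonzero Bochner integral is integrable.
  have hφ : IntegrableOn φ (Ioi 0) := Integrable.of_integral_ne_zero (by rw [hnorm]; simp)
  rw [← hnorm]
  refine setIntegral_mono_on (integrableOn_exp_mul hφ hz) hφ measurableSet_Ioi fun x hx => ?_
  refine mul_le_of_le_one_left (hpos x) ?_
  rw [Real.exp_le_one_iff]
  have := mul_nonneg hz (le_of_lt (mem_Ioi.1 hx)); linarith

lemma laplace_pos {φ : ℝ → ℝ} (hpos : ∀ x, 0 ≤ φ x)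
    (hnorm : (∫ s in Ioi (0:ℝ), φ s) = 1) {z : ℝ} (hz : 0 ≤ z) : 0 < laplace φ z := by
  have hφ : IntegrableOn φ (Ioi 0) := Integrable.of_integral_ne_zero (by rw [hnorm]; simp)
  have h1 : 0 < ∫ s in Ioi (0:ℝ), φ s := by rw [hnorm]; exact one_pos
  rw [integral_pos_iff_support_of_nonneg (fun x => hpos x) hφ] at h1
  rw [laplace, integral_pos_iff_support_of_nonneg
    (fun x => mul_nonneg (Real.exp_pos _).le (hpos x)) (integrableOn_exp_mul hφ hz)]
  convert h1 using 2
  ext x; simp [Real.exp_ne_zero]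

/-- The resolvent `ψ = ∑_{k ≥ 1} a^k φ^{*k}`. -/
noncomputable def resolventSeries (φ : ℝ → ℝ) (a x : ℝ) : ℝ :=
  ∑' k : ℕ, a ^ (k + 1) * convPow φ k x

lemma resolvent_nonneg {φ : ℝ → ℝ} (hpos : ∀ x, 0 ≤ φ x) {a : ℝ} (ha : 0 ≤ a) {x : ℝ}
    (hx : 0 ≤ x) : 0 ≤ resolventSeries φ a x :=
  tsum_nonneg fun k => mul_nonneg (pow_nonneg ha _) (convPow_nonneg hpos k hx)

/-- Termwise integration of the resolvent series gives a geometric series. -/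
lemma laplace_resolvent {φ : ℝ → ℝ} (hpos : ∀ x, 0 ≤ φ x)
    (hnorm : (∫ s in Ioi (0:ℝ), φ s) = 1) {a : ℝ} (ha : a ∈ Ioo (0:ℝ) 1) {z : ℝ} (hz : 0 ≤ z) :
    laplace (resolventSeries φ a) z = a * laplace φ z / (1 - a * laplace φ z) := by
  have hφ : IntegrableOn φ (Ioi 0) := Integrable.of_integral_ne_zero (by rw [hnorm]; simp)
  have hφz := integrableOn_exp_mul hφ hz
  set L := laplace φ z with hL
  have hLdef : ∫ x in Ioi (0:ℝ), Real.exp (-z * x) * φ x = L := rfl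
  have hL0 : 0 ≤ L := laplace_nonneg hpos z
  have hL1 : L ≤ 1 := laplace_le_one hpos hnorm hz
  have haL0 : 0 ≤ a * L := mul_nonneg ha.1.le hL0
  have haL : a * L < 1 := by nlinarith [ha.1, ha.2]
  set F : ℕ → ℝ → ℝ := fun k x =>
    a ^ (k + 1) * convPow (fun y => Real.exp (-z * y) * φ y) k x with hF
  have hFi : ∀ k, IntegrableOn (F k) (Ioi 0) := fun k =>
    (convPow_integrableOn hφz k).const_mul _
  have hF0 : ∀ k, ∀ x ∈ Ioi (0:ℝ), 0 ≤ F k x := fun k x hx =>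
    mul_nonneg (pow_nonneg ha.1.le _)
      (convPow_nonneg (fun y => mul_nonneg (Real.exp_pos _).le (hpos y)) k (le_of_lt hx))
  have hFint : ∀ k, ∫ x in Ioi (0:ℝ), F k x = (a * L) ^ (k + 1) := fun k => by
    rw [hF]
    simp only
    rw [integral_const_mul, convPow_integral hφz, hLdef, mul_pow]
  have hFnorm : ∀ k, ∫ x in Ioi (0:ℝ), ‖F k x‖ = (a * L) ^ (k + 1) := fun k => by
    rw [← hFint k]
    exact setIntegral_congr_fun measurableSet_Ioi fun x hx => Real.norm_of_nonneg (hF0 k x hx)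
  have hgeo : HasSum (fun k : ℕ => (a * L) ^ (k + 1)) (a * L / (1 - a * L)) := by
    simpa only [pow_succ', div_eq_mul_inv] using
      (hasSum_geometric_of_lt_one haL0 haL).mul_left (a * L)
  have hs := hasSum_integral_of_summable_integral_norm hFi
    (by simp only [hFnorm]; exact hgeo.summable)
  simp only [hFint] at hs
  rw [← hs.unique hgeo, laplace]
  congr 1 with x
  rw [resolventSeries, ← tsum_mul_left]
  congr 1 with k
  simp only [hF]
  rw [← exp_mul_convPow]
  ring

lemma integral_resolvent {φ : ℝ → ℝ} (hpos : ∀ x, 0 ≤ φ x)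
    (hnorm : (∫ s in Ioi (0:ℝ), φ s) = 1) {a : ℝ} (ha : a ∈ Ioo (0:ℝ) 1) :
    ∫ s in Ioi (0:ℝ), resolventSeries φ a s = a / (1 - a) := by
  have h := laplace_resolvent hpos hnorm ha le_rfl
  simpa [laplace, hnorm] using h

lemma integrableOn_resolvent {φ : ℝ → ℝ} (hpos : ∀ x, 0 ≤ φ x)
    (hnorm : (∫ s in Ioi (0:ℝ), φ s) = 1) {a : ℝ} (ha : a ∈ Ioo (0:ℝ) 1) :
    IntegrableOn (resolventSeries φ a) (Ioi 0) := by
  refine Integrable.of_integral_ne_zero ?_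
  rw [integral_resolvent hpos hnorm ha]
  exact (div_pos ha.1 (sub_pos.2 ha.2)).ne'

/-! ### The Abelian theorem for the Laplace transform of `φ` -/

/-- Since `t ↦ ∫_0^t φ` is the convolution of `1` and `φ`, its Laplace transform is
`laplace φ z / z`. -/
lemma one_sub_laplace {φ : ℝ → ℝ}
    (hnorm : (∫ s in Ioi (0:ℝ), φ s) = 1) {z : ℝ} (hz : 0 < z) :
    1 - laplace φ z =
      ∫ x in Ioi (0:ℝ), z * (Real.exp (-z * x) * (1 - ∫ s in (0:ℝ)..x, φ s)) := by
  have hφ : IntegrableOn φ (Ioi 0) := Integrable.of_integral_ne_zero (by rw [hnorm]; simp)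
  have hφz := integrableOn_exp_mul hφ hz.le
  have he : IntegrableOn (fun x => Real.exp (-z * x) * (1:ℝ)) (Ioi 0) := by
    simpa using integrableOn_exp_mul_Ioi (neg_lt_zero.2 hz) 0
  have hei : ∫ x in Ioi (0:ℝ), Real.exp (-z * x) * (1:ℝ) = 1 / z := by
    simp only [mul_one]
    rw [integral_exp_mul_Ioi (neg_lt_zero.2 hz)]
    simp
  have hc : ∀ x, Real.exp (-z * x) * ∫ s in (0:ℝ)..x, φ s =
      conv (fun x => Real.exp (-z * x) * (1:ℝ)) (fun x => Real.exp (-z * x) * φ x) x := by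
    intro x
    rw [← exp_mul_conv z (fun _ => 1) φ x]
    simp [conv]
  have hci := conv_integral he hφz
  have hcI := conv_integrableOn he hφz
  rw [hei] at hci
  rw [integral_const_mul]
  simp_rw [mul_sub, hc]
  rw [integral_sub he hcI, hci, hei]
  change 1 - laplace φ z = z * (1 / z - 1 / z * laplace φ z)
  field_simp

lemma tail_mem_Icc {φ : ℝ → ℝ} (hpos : ∀ x, 0 ≤ φ x)
    (hnorm : (∫ s in Ioi (0:ℝ), φ s) = 1) {x : ℝ} (hx : 0 ≤ x) :
    1 - ∫ s in (0:ℝ)..x, φ s ∈ Icc (0:ℝ) 1 := by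
  have hφ : IntegrableOn φ (Ioi 0) := Integrable.of_integral_ne_zero (by rw [hnorm]; simp)
  have h1 : ∫ s in (0:ℝ)..x, φ s ≤ 1 := by
    rw [intervalIntegral.integral_of_le hx, ← hnorm]
    exact setIntegral_mono_set hφ (Eventually.of_forall hpos)
      (Ioc_subset_Ioi_self.eventuallyLE)
  have h0 : 0 ≤ ∫ s in (0:ℝ)..x, φ s := intervalIntegral.integral_nonneg hx fun s _ => hpos s
  constructor <;> linarith

/-- The tail asymptotics hold as a bound on the whole half line, because `1 - F ≤ 1` near `0`;
this provides the dominating function in `abelian`. -/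
lemma tail_bound {α K : ℝ} (hα : α ∈ Ioo (0:ℝ) 1) {φ : ℝ → ℝ} (hpos : ∀ x, 0 ≤ φ x)
    (hnorm : (∫ s in Ioi (0:ℝ), φ s) = 1)
    (htail : Tendsto (fun x : ℝ => α * x ^ α * (1 - ∫ s in (0:ℝ)..x, φ s)) atTop (nhds K)) :
    ∃ C, ∀ x > 0, x ^ α * (1 - ∫ s in (0:ℝ)..x, φ s) ≤ C := by
  obtain ⟨X, hX⟩ := eventually_atTop.1 (htail.eventually (eventually_le_nhds (lt_add_one K)))
  refine ⟨max ((K + 1) / α) (|X| ^ α), fun x hx => ?_⟩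
  rcases le_total X x with h | h
  · refine le_trans ?_ (le_max_left _ _)
    rw [le_div_iff₀ hα.1]
    calc _ = α * x ^ α * (1 - ∫ s in (0:ℝ)..x, φ s) := by ring
      _ ≤ _ := hX x h
  · refine le_trans ?_ (le_max_right _ _)
    have h1 := (tail_mem_Icc hpos hnorm hx.le)
    have h2 : x ^ α ≤ |X| ^ α := Real.rpow_le_rpow hx.le (h.trans (le_abs_self X)) hα.1.le
    have h3 : 0 ≤ x ^ α := Real.rpow_nonneg hx.le _
    nlinarith [h1.1, h1.2]

/-- If the tail `1 - F(x)` behaves like `(K / α) x ^ (-α)`, then `1 - laplace φ z` behaves like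
`δ z ^ α` as `z = 1 / T → 0`. -/
lemma abelian {α K : ℝ} (hα : α ∈ Ioo (0:ℝ) 1) {φ : ℝ → ℝ} (hpos : ∀ x, 0 ≤ φ x)
    (hnorm : (∫ s in Ioi (0:ℝ), φ s) = 1)
    (htail : Tendsto (fun x : ℝ => α * x ^ α * (1 - ∫ s in (0:ℝ)..x, φ s)) atTop (nhds K)) :
    Tendsto (fun T : ℝ => T ^ α * (1 - laplace φ T⁻¹)) atTop
      (nhds (K * Real.Gamma (1 - α) / α)) := by
  obtain ⟨C, hC⟩ := tail_bound hα hpos hnorm htail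
  have hφ : IntegrableOn φ (Ioi 0) := Integrable.of_integral_ne_zero (by rw [hnorm]; simp)
  have hα1 : 0 < 1 - α := sub_pos.2 hα.2
  set G : ℝ → ℝ := fun x => 1 - ∫ s in (0:ℝ)..x, φ s with hG
  -- On the half line `G` coincides with the continuous function obtained by cutting `φ` off.
  have hGc : Continuous fun x => 1 - ∫ s in (0:ℝ)..x, (Ioi (0:ℝ)).indicator φ s :=
    continuous_const.sub (intervalIntegral.continuous_primitive
      (fun a b => ((integrable_indicator_iff measurableSet_Ioi).2 hφ).intervalIntegrable) 0)
  have hGeq : ∀ x, 0 ≤ x → 1 - ∫ s in (0:ℝ)..x, (Ioi (0:ℝ)).indicator φ s = G x := by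
    intro x hx
    simp only [hG]
    rw [intervalIntegral.integral_of_le hx, intervalIntegral.integral_of_le hx]
    congr 1
    exact setIntegral_congr_fun measurableSet_Ioc fun s hs => indicator_of_mem hs.1 φ
  -- After the substitution `x = T u` the scaled quantity is an integral against `exp (-u)`.
  have hform : ∀ᶠ T : ℝ in atTop, T ^ α * (1 - laplace φ T⁻¹) =
      ∫ u in Ioi (0:ℝ), Real.exp (-u) * (T ^ α * G (T * u)) := by
    filter_upwards [eventually_gt_atTop 0] with T hT
    rw [one_sub_laplace hnorm (inv_pos.2 hT)]
    have := integral_comp_mul_left_Ioi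
      (fun x => T⁻¹ * (Real.exp (-T⁻¹ * x) * G x)) 0 hT
    rw [mul_zero, smul_eq_mul, eq_inv_mul_iff_mul_eq₀ hT.ne'] at this
    rw [← this, ← integral_const_mul, ← integral_const_mul]
    congr 1 with u
    have : -T⁻¹ * (T * u) = -u := by field_simp
    rw [this]
    field_simp
  have hlim : ∫ u in Ioi (0:ℝ), Real.exp (-u) * (u ^ (-α) * (K / α)) =
      K * Real.Gamma (1 - α) / α := by
    rw [Real.Gamma_eq_integral hα1]
    rw [mul_div_right_comm, ← integral_const_mul]
    congr 1 with u
    rw [show 1 - α - 1 = -α by ring]; ring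
  rw [tendsto_congr' hform, ← hlim]
  refine tendsto_integral_filter_of_dominated_convergence
    (fun u => Real.exp (-u) * u ^ (-α) * C) ?_ ?_ ?_ ?_
  · filter_upwards [eventually_gt_atTop 0] with T hT
    have hcont : Continuous fun u => Real.exp (-u) *
        (T ^ α * (1 - ∫ s in (0:ℝ)..T * u, (Ioi (0:ℝ)).indicator φ s)) :=
      (by fun_prop : Continuous fun u : ℝ => Real.exp (-u)).mul
        (continuous_const.mul (hGc.comp (continuous_const_mul T)))
    refine hcont.aestronglyMeasurable.congr ?_
    filter_upwards [ae_restrict_mem measurableSet_Ioi] with u hu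
    rw [hGeq _ (mul_pos hT hu).le]
  · filter_upwards [eventually_gt_atTop 0] with T hT
    filter_upwards [ae_restrict_mem measurableSet_Ioi] with u hu
    have hu : 0 < u := hu
    have h0 : 0 ≤ G (T * u) := (tail_mem_Icc hpos hnorm (mul_pos hT hu).le).1
    have h1 : (T * u) ^ α * G (T * u) ≤ C := hC (T * u) (mul_pos hT hu)
    rw [Real.mul_rpow hT.le hu.le] at h1
    rw [Real.norm_of_nonneg (by positivity), mul_assoc]
    refine mul_le_mul_of_nonneg_left ?_ (Real.exp_pos _).le
    have h2 : u ^ (-α) * u ^ α = 1 := by rw [← Real.rpow_add hu]; simp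
    calc T ^ α * G (T * u) = u ^ (-α) * u ^ α * (T ^ α * G (T * u)) := by rw [h2, one_mul]
      _ = u ^ (-α) * (T ^ α * u ^ α * G (T * u)) := by ring
      _ ≤ _ := mul_le_mul_of_nonneg_left h1 (Real.rpow_nonneg hu.le _)
  · have := (Real.GammaIntegral_convergent hα1).mul_const C
    rwa [show 1 - α - 1 = -α by ring] at this
  · filter_upwards [ae_restrict_mem measurableSet_Ioi] with u hu
    have hu : 0 < u := hu
    refine Tendsto.const_mul _ ?_
    have h1 : Tendsto (fun T : ℝ => T * u) atTop atTop := tendsto_id.atTop_mul_const hu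
    have h2 := ((htail.comp h1).div_const α).const_mul (u ^ (-α))
    refine h2.congr' ?_
    filter_upwards [eventually_gt_atTop 0] with T hT
    have h3 : u ^ (-α) * u ^ α = 1 := by rw [← Real.rpow_add hu]; simp
    have := hα.1.ne'
    simp only [Function.comp, Real.mul_rpow hT.le hu.le]
    calc u ^ (-α) * (α * (T ^ α * u ^ α) * (1 - ∫ s in (0:ℝ)..T * u, φ s) / α)
        = (u ^ (-α) * u ^ α) * (T ^ α * (1 - ∫ s in (0:ℝ)..T * u, φ s)) := by
          field_simp
      _ = _ := by rw [h3, one_mul]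

/-! ### The Laplace transform of the Mittag-Leffler density -/

/-- Termwise integration of the Mittag-Leffler series; it is legitimate for `λ < z ^ α`, where
the resulting geometric series converges absolutely. -/
lemma laplace_falpha {α lam z : ℝ} (hα : 0 < α) (hlam : 0 < lam) (hz : 0 < z)
    (hlz : lam < z ^ α) : laplace (falpha α lam) z = lam / (lam + z ^ α) := by
  have hzα : 0 < z ^ α := Real.rpow_pos_of_pos hz α
  have hpar : ∀ n : ℕ, 0 < α * n + α := fun n => by positivity
  set g : ℕ → ℝ → ℝ := fun n x => x ^ (α * n + α - 1) * Real.exp (-(z * x)) with hg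
  have hgint : ∀ n, ∫ x in Ioi (0:ℝ), g n x =
      Real.Gamma (α * n + α) * ((z ^ α)⁻¹) ^ (n + 1) := fun n => by
    simp only [hg]
    rw [Real.integral_rpow_mul_exp_neg_mul_Ioi (hpar n) hz, mul_comm, one_div,
      Real.inv_rpow hz.le, show α * n + α = α * ((n + 1 : ℕ) : ℝ) by push_cast; ring,
      Real.rpow_mul_natCast hz.le, inv_pow]
  have hgi : ∀ n, IntegrableOn (g n) (Ioi 0) := fun n => by
    refine Integrable.of_integral_ne_zero ?_
    rw [hgint]
    exact (mul_pos (Real.Gamma_pos_of_pos (hpar n)) (by positivity)).ne'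
  have hg0 : ∀ n, ∀ x ∈ Ioi (0:ℝ), 0 ≤ g n x := fun n x hx =>
    mul_nonneg (Real.rpow_nonneg (le_of_lt hx) _) (Real.exp_pos _).le
  set c : ℕ → ℝ := fun n => lam * (-lam) ^ n / Real.Gamma (α * n + α) with hc
  set F : ℕ → ℝ → ℝ := fun n x => c n * g n x with hF
  have hFint : ∀ n, ∫ x in Ioi (0:ℝ), F n x = lam / z ^ α * (-lam / z ^ α) ^ n := fun n => by
    have := (Real.Gamma_pos_of_pos (hpar n)).ne'
    simp only [hF, hc]
    rw [integral_const_mul, hgint, div_pow, inv_pow, pow_succ (z ^ α)]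
    field_simp
  have hFnorm : ∀ n, ∫ x in Ioi (0:ℝ), ‖F n x‖ = lam / z ^ α * (lam / z ^ α) ^ n := fun n => by
    have hG := Real.Gamma_pos_of_pos (hpar n)
    have : ∫ x in Ioi (0:ℝ), ‖F n x‖ = ∫ x in Ioi (0:ℝ), |c n| * g n x :=
      setIntegral_congr_fun measurableSet_Ioi fun x hx => by
        simp only [hF]
        rw [norm_mul, Real.norm_eq_abs, Real.norm_of_nonneg (hg0 n x hx)]
    rw [this, integral_const_mul, hgint]
    simp only [hc]
    rw [abs_div, abs_mul, abs_pow, abs_neg, abs_of_pos hlam, abs_of_pos hG, div_pow, inv_pow,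
      pow_succ (z ^ α)]
    field_simp
  have hq : ‖-lam / z ^ α‖ < 1 := by
    rw [norm_div, norm_neg, Real.norm_of_nonneg hlam.le, Real.norm_of_nonneg hzα.le]
    exact (div_lt_one hzα).2 hlz
  have hgeo := (hasSum_geometric_of_norm_lt_one hq).mul_left (lam / z ^ α)
  have hs := hasSum_integral_of_summable_integral_norm (fun n => (hgi n).const_mul (c n))
    (by
      change Summable fun n => ∫ x in Ioi (0:ℝ), ‖F n x‖
      simp only [hFnorm]
      exact (summable_geometric_of_lt_one (by positivity) ((div_lt_one hzα).2 hlz)).mul_left _)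
  change HasSum (fun n => ∫ x in Ioi (0:ℝ), F n x) (∫ x in Ioi (0:ℝ), ∑' n, F n x) at hs
  simp only [hFint] at hs
  have hval : lam / z ^ α * (1 - -lam / z ^ α)⁻¹ = lam / (lam + z ^ α) := by
    have h1 : (1 - -lam / z ^ α) = (lam + z ^ α) / z ^ α := by field_simp; ring
    rw [h1, inv_div]
    field_simp
  rw [← hval, ← hs.unique hgeo, laplace]
  refine setIntegral_congr_fun measurableSet_Ioi fun x hx => ?_
  have hx : 0 < x := hx
  simp only [falpha, mlf]
  rw [← tsum_mul_left, ← tsum_mul_left]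
  congr 1 with n
  simp only [hF, hc, hg]
  have h1 : x ^ (α * n + α - 1) = x ^ (α - 1) * (x ^ α) ^ n := by
    rw [← Real.rpow_mul_natCast hx.le, ← Real.rpow_add hx]; ring_nf
  rw [h1, mul_pow, neg_mul]
  ring

lemma integrableOn_exp_mul_falpha {α lam z : ℝ} (hα : 0 < α) (hlam : 0 < lam) (hz : 0 < z)
    (hlz : lam < z ^ α) :
    IntegrableOn (fun x => Real.exp (-z * x) * falpha α lam x) (Ioi 0) := by
  refine Integrable.of_integral_ne_zero ?_
  change laplace (falpha α lam) z ≠ 0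
  rw [laplace_falpha hα hlam hz hlz]
  have := Real.rpow_pos_of_pos hz α
  positivity

/-! ### From moments of `exp (-x)` to uniform convergence of cumulative functions -/

lemma integrableOn_comp_exp_mul {h : ℝ → ℝ} (hh : Continuous h) {g : ℝ → ℝ}
    (hg : IntegrableOn g (Ioi 0)) :
    IntegrableOn (fun x => h (Real.exp (-x)) * g x) (Ioi 0) := by
  obtain ⟨C, hC⟩ := (isCompact_Icc (a := (0:ℝ)) (b := 1)).exists_bound_of_continuousOn
    hh.continuousOn
  refine Integrable.bdd_mul (c := C) hg
    (Continuous.aestronglyMeasurable (by fun_prop)) ?_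
  filter_upwards [ae_restrict_mem measurableSet_Ioi] with x hx
  refine hC _ ⟨(Real.exp_pos _).le, ?_⟩
  rw [Real.exp_le_one_iff]; linarith [mem_Ioi.1 hx]

lemma tendsto_polynomial {g : ℕ → ℝ → ℝ} {g₀ : ℝ → ℝ}
    (hgi : ∀ᶠ n in atTop, IntegrableOn (g n) (Ioi 0)) (hg₀ : IntegrableOn g₀ (Ioi 0))
    (hmom : ∀ k : ℕ, Tendsto (fun n => ∫ x in Ioi (0:ℝ), Real.exp (-x) ^ k * g n x) atTop
      (nhds (∫ x in Ioi (0:ℝ), Real.exp (-x) ^ k * g₀ x))) (p : Polynomial ℝ) :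
    Tendsto (fun n => ∫ x in Ioi (0:ℝ), p.eval (Real.exp (-x)) * g n x) atTop
      (nhds (∫ x in Ioi (0:ℝ), p.eval (Real.exp (-x)) * g₀ x)) := by
  induction p using Polynomial.induction_on' with
  | add p q hp hq =>
    simp only [Polynomial.eval_add, add_mul]
    rw [integral_add (integrableOn_comp_exp_mul p.continuous hg₀)
      (integrableOn_comp_exp_mul q.continuous hg₀)]
    refine (hp.add hq).congr' ?_
    filter_upwards [hgi] with n hn
    rw [integral_add (integrableOn_comp_exp_mul p.continuous hn)
      (integrableOn_comp_exp_mul q.continuous hn)]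
  | monomial k c =>
    simp only [Polynomial.eval_monomial, mul_assoc, integral_const_mul]
    exact (hmom k).const_mul c

/-- Weierstrass approximation upgrades convergence of the moments of `u = exp (-x)` to
convergence against every continuous function of `u`. -/
lemma tendsto_continuous {g : ℕ → ℝ → ℝ} {g₀ : ℝ → ℝ}
    (hg0 : ∀ᶠ n in atTop, ∀ x > 0, 0 ≤ g n x)
    (hgi : ∀ᶠ n in atTop, IntegrableOn (g n) (Ioi 0)) (hg₀ : IntegrableOn g₀ (Ioi 0))
    (hmom : ∀ k : ℕ, Tendsto (fun n => ∫ x in Ioi (0:ℝ), Real.exp (-x) ^ k * g n x) atTop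
      (nhds (∫ x in Ioi (0:ℝ), Real.exp (-x) ^ k * g₀ x))) {h : ℝ → ℝ} (hh : Continuous h) :
    Tendsto (fun n => ∫ x in Ioi (0:ℝ), h (Real.exp (-x)) * g n x) atTop
      (nhds (∫ x in Ioi (0:ℝ), h (Real.exp (-x)) * g₀ x)) := by
  -- Uniform approximation error, for any integrable weight.
  have key : ∀ (p : Polynomial ℝ) (η : ℝ), (∀ x ∈ Icc (0:ℝ) 1, |p.eval x - h x| < η) →
      ∀ w : ℝ → ℝ, IntegrableOn w (Ioi 0) →
      |(∫ x in Ioi (0:ℝ), h (Real.exp (-x)) * w x) -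
        ∫ x in Ioi (0:ℝ), p.eval (Real.exp (-x)) * w x| ≤ η * ∫ x in Ioi (0:ℝ), |w x| := by
    intro p η hp w hw
    rw [← integral_sub (integrableOn_comp_exp_mul hh hw)
      (integrableOn_comp_exp_mul p.continuous hw), ← Real.norm_eq_abs, ← integral_const_mul]
    refine norm_integral_le_of_norm_le (hw.abs.const_mul η) ?_
    filter_upwards [ae_restrict_mem measurableSet_Ioi] with x hx
    rw [← sub_mul, norm_mul, Real.norm_eq_abs, Real.norm_eq_abs, abs_sub_comm]
    refine mul_le_mul_of_nonneg_right (hp _ ⟨(Real.exp_pos _).le, ?_⟩).le (abs_nonneg _)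
    rw [Real.exp_le_one_iff]; linarith [mem_Ioi.1 hx]
  have hmass : ∀ᶠ n in atTop, ∫ x in Ioi (0:ℝ), |g n x| ≤ (∫ x in Ioi (0:ℝ), g₀ x) + 1 := by
    have h0 := hmom 0
    simp only [pow_zero, one_mul] at h0
    filter_upwards [h0.eventually (eventually_le_nhds (lt_add_one _)), hg0] with n hn hn0
    rwa [setIntegral_congr_fun measurableSet_Ioi fun x hx => abs_of_nonneg (hn0 x hx)]
  set M := |∫ x in Ioi (0:ℝ), g₀ x| + 1 + ∫ x in Ioi (0:ℝ), |g₀ x| with hM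
  have hA : 0 ≤ ∫ x in Ioi (0:ℝ), |g₀ x| := integral_nonneg fun x => abs_nonneg _
  have hMpos : 0 < M := by positivity
  rw [Metric.tendsto_nhds]
  intro ε hε
  obtain ⟨p, hp⟩ := exists_polynomial_near_of_continuousOn 0 1 h hh.continuousOn
    (ε / (2 * M)) (by positivity)
  have hpl := tendsto_polynomial hgi hg₀ hmom p
  rw [Metric.tendsto_nhds] at hpl
  filter_upwards [hpl (ε / 2) (by positivity), hgi, hmass] with n hn hni hnm
  have h1 := key p _ hp (g n) hni
  have h2 := key p _ hp g₀ hg₀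
  have h3 : ε / (2 * M) * (∫ x in Ioi (0:ℝ), |g n x|) +
      ε / (2 * M) * (∫ x in Ioi (0:ℝ), |g₀ x|) ≤ ε / 2 := by
    rw [← mul_add]
    calc _ ≤ ε / (2 * M) * M := by
          refine mul_le_mul_of_nonneg_left ?_ (by positivity)
          have := le_abs_self (∫ x in Ioi (0:ℝ), g₀ x)
          linarith
      _ = ε / 2 := by field_simp
  rw [Real.dist_eq] at hn ⊢
  rw [abs_lt] at hn ⊢
  rw [abs_le] at h1 h2
  constructor <;> linarith [hn.1, hn.2, h1.1, h1.2, h2.1, h2.2]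

/-- A cutoff on the half line, written as a function of `u = exp (-x)`: it equals `1` for
`x ≤ s` and `0` for `x ≥ t`. -/
noncomputable def cutoff (s t u : ℝ) : ℝ :=
  max 0 (min 1 ((u - Real.exp (-t)) / (Real.exp (-s) - Real.exp (-t))))

lemma cutoff_continuous (s t : ℝ) : Continuous (cutoff s t) := by
  unfold cutoff; fun_prop

lemma cutoff_nonneg (s t u : ℝ) : 0 ≤ cutoff s t u := le_max_left _ _

lemma cutoff_le_one (s t u : ℝ) : cutoff s t u ≤ 1 := max_le zero_le_one (min_le_left _ _)

lemma cutoff_eq_one {s t x : ℝ} (hst : s < t) (hx : x ≤ s) : cutoff s t (Real.exp (-x)) = 1 := by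
  have h1 : Real.exp (-t) < Real.exp (-s) := Real.exp_lt_exp.2 (by linarith)
  have h2 : Real.exp (-s) ≤ Real.exp (-x) := Real.exp_le_exp.2 (by linarith)
  rw [cutoff, min_eq_left, max_eq_right zero_le_one]
  rw [one_le_div (by linarith)]; linarith

lemma cutoff_eq_zero {s t u : ℝ} (hst : s < t) (hx : u ≤ Real.exp (-t)) : cutoff s t u = 0 := by
  have h1 : Real.exp (-t) < Real.exp (-s) := Real.exp_lt_exp.2 (by linarith)
  rw [cutoff, max_eq_left]
  exact (min_le_right _ _).trans (div_nonpos_of_nonpos_of_nonneg (by linarith) (by linarith))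

/-- The factor `exp (-m x)` is removed by the continuous function `max u (exp (-t)) ^ (-m)`,
which agrees with `u ^ (-m)` wherever the cutoff is nonzero. -/
lemma cutoff_tilt {s t : ℝ} (hst : s < t) (m : ℕ) (x y : ℝ) :
    cutoff s t (Real.exp (-x)) * (max (Real.exp (-x)) (Real.exp (-t)) ^ m)⁻¹ *
      (Real.exp (-x) ^ m * y) = cutoff s t (Real.exp (-x)) * y := by
  rcases le_total (Real.exp (-x)) (Real.exp (-t)) with h | h
  · rw [cutoff_eq_zero hst h]; ring
  · rw [max_eq_left h]
    have := Real.exp_ne_zero (-x)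
    field_simp

lemma tendsto_cutoff {r : ℕ → ℝ → ℝ} {f : ℝ → ℝ} {m : ℕ}
    (hr0 : ∀ᶠ n in atTop, ∀ x > 0, 0 ≤ r n x)
    (hri : ∀ᶠ n in atTop, IntegrableOn (r n) (Ioi 0))
    (hf : IntegrableOn (fun x => Real.exp (-x) ^ m * f x) (Ioi 0))
    (hlim : ∀ k : ℕ, Tendsto (fun n => ∫ x in Ioi (0:ℝ), Real.exp (-x) ^ (k + m) * r n x) atTop
      (nhds (∫ x in Ioi (0:ℝ), Real.exp (-x) ^ (k + m) * f x))) {s t : ℝ} (hst : s < t) :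
    Tendsto (fun n => ∫ x in Ioi (0:ℝ), cutoff s t (Real.exp (-x)) * r n x) atTop
      (nhds (∫ x in Ioi (0:ℝ), cutoff s t (Real.exp (-x)) * f x)) := by
  have h := tendsto_continuous (g := fun n x => Real.exp (-x) ^ m * r n x)
    (g₀ := fun x => Real.exp (-x) ^ m * f x)
    (h := fun u => cutoff s t u * (max u (Real.exp (-t)) ^ m)⁻¹) ?_ ?_ hf ?_ ?_
  · simpa only [cutoff_tilt hst] using h
  · filter_upwards [hr0] with n hn x hx using mul_nonneg (by positivity) (hn x hx)
  · filter_upwards [hri] with n hn using integrableOn_comp_exp_mul (continuous_pow m) hn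
  · intro k
    simpa only [pow_add, mul_assoc] using hlim k
  · refine (cutoff_continuous s t).mul (Continuous.inv₀ (by fun_prop) fun u => ?_)
    exact (pow_pos (lt_max_of_lt_right (Real.exp_pos _)) m).ne'

lemma cutoff_compare {a b s t y : ℝ} (hst : s < t) (has : a ≤ s) (htb : t ≤ b) (hay : a ≤ y)
    (hyb : y ≤ b) (x : ℝ) :
    |cutoff s t (Real.exp (-x)) - (Iic y).indicator 1 x| ≤ (Ioc a b).indicator 1 x := by
  by_cases hx : x ∈ Ioc a b
  · rw [indicator_of_mem hx, Pi.one_apply]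
    have h0 := cutoff_nonneg s t (Real.exp (-x))
    have h1 := cutoff_le_one s t (Real.exp (-x))
    have h2 : (Iic y).indicator (1 : ℝ → ℝ) x ∈ Icc (0:ℝ) 1 := by
      by_cases h : x ∈ Iic y <;> simp [h]
    rw [abs_le]; constructor <;> linarith [h2.1, h2.2]
  · rw [indicator_of_notMem hx]
    rcases le_or_gt x a with h | h
    · rw [cutoff_eq_one hst (h.trans has), indicator_of_mem (mem_Iic.2 (h.trans hay))]
      simp
    · have hb : b < x := not_le.1 fun h' => hx ⟨h, h'⟩
      rw [cutoff_eq_zero hst (Real.exp_le_exp.2 (by linarith)),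
        indicator_of_notMem (by simpa using hyb.trans_lt hb)]
      simp

lemma integral_indicator_Iic {g : ℝ → ℝ} {y : ℝ} (hy : 0 ≤ y) :
    ∫ x in Ioi (0:ℝ), (Iic y).indicator 1 x * g x = ∫ x in (0:ℝ)..y, g x := by
  have h : ∀ x, (Iic y).indicator 1 x * g x = (Iic y).indicator g x := fun x => by
    by_cases hx : x ∈ Iic y <;> simp [hx]
  simp only [h]
  rw [setIntegral_indicator measurableSet_Iic, Ioi_inter_Iic, intervalIntegral.integral_of_le hy]

/-- Nonnegative densities whose Laplace transforms converge at all large integers have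
cumulative functions converging uniformly on `[0, 1]`. The limit `f` need not be known to be nonnegative:
the cutoff error is controlled by the continuous function `t ↦ ∫_0^t |f|`. -/
lemma tendstoUniformlyOn_cdf {r : ℕ → ℝ → ℝ} {f : ℝ → ℝ} {m : ℕ}
    (hr0 : ∀ᶠ n in atTop, ∀ x > 0, 0 ≤ r n x)
    (hri : ∀ᶠ n in atTop, IntegrableOn (r n) (Ioi 0))
    (hf : IntegrableOn (fun x => Real.exp (-x) ^ m * f x) (Ioi 0))
    (hlim : ∀ k : ℕ, Tendsto (fun n => ∫ x in Ioi (0:ℝ), Real.exp (-x) ^ (k + m) * r n x) atTop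
      (nhds (∫ x in Ioi (0:ℝ), Real.exp (-x) ^ (k + m) * f x))) :
    TendstoUniformlyOn (fun n t => ∫ x in (0:ℝ)..t, r n x) (fun t => ∫ x in (0:ℝ)..t, f x)
      atTop (Icc 0 1) := by
  set f₁ : ℝ → ℝ := (Ioi (0:ℝ)).indicator f with hf₁
  have hfi : ∀ a b, IntervalIntegrable f₁ volume a b := by
    intro a b
    have h1 : IntervalIntegrable
        ((Ioi (0:ℝ)).indicator fun x => Real.exp (-x) ^ m * f x) volume a b :=
      ((integrable_indicator_iff measurableSet_Ioi).2 hf).intervalIntegrable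
    have h2 := h1.continuousOn_mul (g := fun x => Real.exp x ^ m)
      (Continuous.continuousOn (by fun_prop))
    refine h2.congr fun x _ => ?_
    by_cases hx : x ∈ Ioi (0:ℝ)
    · simp only [hf₁, indicator_of_mem hx]
      rw [← mul_assoc, ← mul_pow, ← Real.exp_add]
      simp
    · simp only [hf₁, indicator_of_notMem hx, mul_zero]
  set A : ℝ → ℝ := fun t => ∫ x in (0:ℝ)..t, |f₁ x| with hA
  have hAc : Continuous A :=
    intervalIntegral.continuous_primitive (fun a b => (hfi a b).abs) 0
  -- Comparison of the cutoff integral of `f` with its cumulative function.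
  have hcmp : ∀ {a b s t y : ℝ}, s < t → a ≤ s → t ≤ b → a ≤ y → y ≤ b → 0 ≤ y →
      |(∫ x in Ioi (0:ℝ), cutoff s t (Real.exp (-x)) * f x) - ∫ x in (0:ℝ)..y, f x|
        ≤ A b - A a := by
    intro a b s t y hst has htb hay hyb hy
    have hcf : IntegrableOn (fun x => cutoff s t (Real.exp (-x)) * f x) (Ioi 0) := by
      have := integrableOn_comp_exp_mul
        (h := fun u => cutoff s t u * (max u (Real.exp (-t)) ^ m)⁻¹)
        ((cutoff_continuous s t).mul (Continuous.inv₀ (by fun_prop) fun u =>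
          (pow_pos (lt_max_of_lt_right (Real.exp_pos _)) m).ne')) hf
      simpa only [cutoff_tilt hst] using this
    have hif : IntegrableOn (fun x => (Iic y).indicator 1 x * f x) (Ioi 0) := by
      have h1 : IntegrableOn f₁ (Ioc 0 y) := (hfi 0 y).1
      have h2 : Integrable ((Ioc 0 y).indicator f₁) :=
        (integrable_indicator_iff measurableSet_Ioc).2 h1
      refine h2.integrableOn.congr_fun (fun x hx => ?_) measurableSet_Ioi
      have hx : 0 < x := hx
      by_cases hxy : x ≤ y <;> simp [hf₁, indicator, hx, hxy]
    rw [← integral_indicator_Iic hy, ← integral_sub hcf hif, hA]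
    simp only
    rw [intervalIntegral.integral_interval_sub_left (hfi 0 b).abs (hfi 0 a).abs,
      intervalIntegral.integral_of_le (hay.trans hyb), ← integral_indicator measurableSet_Ioi,
      ← integral_indicator measurableSet_Ioc, ← Real.norm_eq_abs]
    refine norm_integral_le_of_norm_le
      ((integrable_indicator_iff measurableSet_Ioc).2 (hfi a b).abs.1)
      (Eventually.of_forall fun x => ?_)
    have h := cutoff_compare hst has htb hay hyb x
    by_cases hx : x ∈ Ioi (0:ℝ)
    · rw [indicator_of_mem hx, ← sub_mul, norm_mul, Real.norm_eq_abs, Real.norm_eq_abs]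
      have h3 : (Ioc a b).indicator (fun x => |f₁ x|) x = (Ioc a b).indicator 1 x * |f x| := by
        by_cases hx' : x ∈ Ioc a b
        · rw [indicator_of_mem hx', indicator_of_mem hx', hf₁, indicator_of_mem hx]; simp
        · rw [indicator_of_notMem hx', indicator_of_notMem hx']; simp
      rw [h3]
      exact mul_le_mul_of_nonneg_right h (abs_nonneg _)
    · rw [indicator_of_notMem hx, norm_zero]
      exact indicator_nonneg (fun x _ => abs_nonneg _) x
  rw [← tendstoLocallyUniformlyOn_iff_tendstoUniformlyOn_of_compact isCompact_Icc,
    Metric.tendstoLocallyUniformlyOn_iff]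
  intro ε hε t ht
  obtain ⟨δ, hδ, hAδ⟩ := Metric.continuousAt_iff.1 (hAc.continuousAt (x := t)) (ε / 4)
    (by positivity)
  set d := δ / 3 with hd
  have hdpos : 0 < d := by positivity
  have hosc : A (t + 2 * d) - A (t - 2 * d) < ε / 2 := by
    have h1 := hAδ (x := t + 2 * d) (by
      rw [Real.dist_eq, abs_lt]; constructor <;> linarith)
    have h2 := hAδ (x := t - 2 * d) (by
      rw [Real.dist_eq, abs_lt]; constructor <;> linarith)
    rw [Real.dist_eq, abs_lt] at h1 h2
    linarith [h1.2, h2.1]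
  refine ⟨Ioo (t - d) (t + d) ∩ Icc 0 1, ?_, ?_⟩
  · rw [inter_comm]
    exact inter_mem self_mem_nhdsWithin
      (mem_nhdsWithin_of_mem_nhds (Ioo_mem_nhds (by linarith) (by linarith)))
  have hlo := tendsto_cutoff hr0 hri hf hlim (show t - 2 * d < t - d by linarith)
  have hhi := tendsto_cutoff hr0 hri hf hlim (show t + d < t + 2 * d by linarith)
  rw [Metric.tendsto_nhds] at hlo hhi
  filter_upwards [hlo (ε / 2) (by positivity), hhi (ε / 2) (by positivity), hr0, hri]
    with n hn1 hn2 hn0 hni y hy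
  obtain ⟨⟨hy1, hy2⟩, hy0, _⟩ := hy
  have hc1 := hcmp (show t - 2 * d < t - d by linarith) le_rfl
    (show t - d ≤ t + 2 * d by linarith) (show t - 2 * d ≤ y by linarith)
    (show y ≤ t + 2 * d by linarith) hy0
  have hc2 := hcmp (show t + d < t + 2 * d by linarith) (show t - 2 * d ≤ t + d by linarith)
    le_rfl (show t - 2 * d ≤ y by linarith) (show y ≤ t + 2 * d by linarith) hy0
  have hir : IntegrableOn (fun x => (Iic y).indicator 1 x * r n x) (Ioi 0) := by
    refine (Integrable.indicator hni (measurableSet_Iic (a := y))).congr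
      (Eventually.of_forall fun x => ?_)
    by_cases hx : x ∈ Iic y <;> simp [hx]
  have hm1 : ∫ x in Ioi (0:ℝ), cutoff (t - 2 * d) (t - d) (Real.exp (-x)) * r n x ≤
      ∫ x in (0:ℝ)..y, r n x := by
    rw [← integral_indicator_Iic hy0]
    refine setIntegral_mono_on (integrableOn_comp_exp_mul (cutoff_continuous _ _) hni) hir
      measurableSet_Ioi fun x hx => mul_le_mul_of_nonneg_right ?_ (hn0 x hx)
    by_cases hxy : x ∈ Iic y
    · rw [indicator_of_mem hxy]; exact cutoff_le_one _ _ _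
    · have : y < x := by simpa using hxy
      rw [indicator_of_notMem hxy, cutoff_eq_zero (by linarith)
        (Real.exp_le_exp.2 (by linarith))]
  have hm2 : ∫ x in (0:ℝ)..y, r n x ≤
      ∫ x in Ioi (0:ℝ), cutoff (t + d) (t + 2 * d) (Real.exp (-x)) * r n x := by
    rw [← integral_indicator_Iic hy0]
    refine setIntegral_mono_on hir (integrableOn_comp_exp_mul (cutoff_continuous _ _) hni)
      measurableSet_Ioi fun x hx => mul_le_mul_of_nonneg_right ?_ (hn0 x hx)
    by_cases hxy : x ∈ Iic y
    · have : x ≤ y := hxy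
      rw [indicator_of_mem hxy, cutoff_eq_one (by linarith) (by linarith)]; rfl
    · rw [indicator_of_notMem hxy]; exact cutoff_nonneg _ _ _
  rw [Real.dist_eq] at hn1 hn2 ⊢
  rw [abs_lt] at hn1 hn2 ⊢
  rw [abs_le] at hc1 hc2
  constructor <;> linarith [hn1.1, hn2.2, hc1.1, hc1.2, hc2.1, hc2.2]

/-! ### Laplace transforms of the rescaled densities -/

lemma laplace_rescaled {φ : ℝ → ℝ} (hpos : ∀ x, 0 ≤ φ x)
    (hnorm : (∫ s in Ioi (0:ℝ), φ s) = 1) {a : ℝ} (ha : a ∈ Ioo (0:ℝ) 1) {T z : ℝ} (hT : 0 < T)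
    (hz : 0 < z) :
    ∫ x in Ioi (0:ℝ), Real.exp (-z * x) *
        (T * resolventSeries φ a (T * x) / ∫ s in Ioi (0:ℝ), resolventSeries φ a s) =
      (1 - a) * laplace φ (T / z)⁻¹ / (1 - a * laplace φ (T / z)⁻¹) := by
  rw [integral_resolvent hpos hnorm ha]
  have h1 := integral_comp_mul_left_Ioi
    (fun x => Real.exp (-(T / z)⁻¹ * x) * resolventSeries φ a x) 0 hT
  rw [mul_zero, smul_eq_mul, eq_inv_mul_iff_mul_eq₀ hT.ne'] at h1
  have h2 := laplace_resolvent hpos hnorm ha (z := (T / z)⁻¹) (by positivity)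
  rw [laplace, ← h1] at h2
  have ha0 := ha.1.ne'
  have ha1 : 1 - a ≠ 0 := (sub_pos.2 ha.2).ne'
  calc _ = ∫ x in Ioi (0:ℝ), (1 - a) / a * (T * (Real.exp (-(T / z)⁻¹ * (T * x)) *
        resolventSeries φ a (T * x))) := by
        congr 1 with x
        have : -(T / z)⁻¹ * (T * x) = -z * x := by field_simp
        rw [this]
        field_simp
    _ = _ := by
        rw [integral_const_mul, integral_const_mul, h2]
        field_simp

/-- Multiplying numerator and denominator by `T_n ^ α` turns the speed hypothesis and `abelian`
into the limit `λ δ / (λ δ + z ^ α δ)`. -/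
lemma tendsto_laplace_rescaled {α K lam : ℝ} (hα : α ∈ Ioo (0:ℝ) 1)
    (hK : 0 < K) (hlam : 0 < lam) {φ : ℝ → ℝ} (hpos : ∀ x, 0 ≤ φ x)
    (hnorm : (∫ s in Ioi (0:ℝ), φ s) = 1)
    (htail : Tendsto (fun x : ℝ => α * x ^ α * (1 - ∫ s in (0:ℝ)..x, φ s)) atTop (nhds K))
    {T : ℕ → ℝ} (hT : Tendsto T atTop atTop) {a : ℕ → ℝ}
    (hspeed : Tendsto (fun n => (T n) ^ α * (1 - a n)) atTop
      (nhds (lam * (K * Real.Gamma (1 - α) / α)))) {z : ℝ} (hz : 0 < z) :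
    Tendsto (fun n => (1 - a n) * laplace φ (T n / z)⁻¹ / (1 - a n * laplace φ (T n / z)⁻¹))
      atTop (nhds (lam / (lam + z ^ α))) := by
  set δ := K * Real.Gamma (1 - α) / α with hδ
  have hδpos : 0 < δ :=
    div_pos (mul_pos hK (Real.Gamma_pos_of_pos (sub_pos.2 hα.2))) hα.1
  have hzα : 0 < z ^ α := Real.rpow_pos_of_pos hz α
  set L : ℕ → ℝ := fun n => laplace φ (T n / z)⁻¹ with hL
  have hTα : Tendsto (fun n => T n ^ α) atTop atTop := (tendsto_rpow_atTop hα.1).comp hT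
  have hv : Tendsto (fun n => T n ^ α * (1 - L n)) atTop (nhds (z ^ α * δ)) := by
    have h1 := ((abelian hα hpos hnorm htail).comp (hT.atTop_div_const hz)).const_mul (z ^ α)
    refine h1.congr' ?_
    filter_upwards [hT.eventually_gt_atTop 0] with n hn
    simp only [Function.comp, hL]
    rw [Real.div_rpow hn.le hz.le]
    field_simp
  -- If `T n ^ α * (1 - u n)` converges then `u n → 1`, because `T n ^ α → ∞`.
  have hto : ∀ {u : ℕ → ℝ} {c : ℝ}, Tendsto (fun n => T n ^ α * (1 - u n)) atTop (nhds c) →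
      Tendsto u atTop (nhds 1) := by
    intro u c hu
    have h := (hu.mul hTα.inv_tendsto_atTop).const_sub 1
    rw [mul_zero, sub_zero] at h
    refine h.congr' ?_
    filter_upwards [hTα.eventually_gt_atTop 0] with n hn
    simp only [Pi.inv_apply]
    field_simp
    ring
  have ha1 := hto hspeed
  have hL1 := hto hv
  have hden : lam * δ + 1 * (z ^ α * δ) ≠ 0 := by positivity
  have h := (hspeed.mul hL1).div (hspeed.add (ha1.mul hv)) hden
  have hval : lam * δ * 1 / (lam * δ + 1 * (z ^ α * δ)) = lam / (lam + z ^ α) := by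
    field_simp
  rw [hval] at h
  refine h.congr' ?_
  filter_upwards [hTα.eventually_gt_atTop 0] with n hn
  simp only [Pi.div_apply]
  have h1 : T n ^ α * (1 - a n) + a n * (T n ^ α * (1 - L n)) = T n ^ α * (1 - a n * L n) := by
    ring
  rw [h1, mul_assoc, mul_div_mul_left _ _ hn.ne']

/-- under the heavy-tail assumption on `φ` and the nearly unstable
regime `T_n^α (1 - a_n) → λ δ` with `δ = K Γ(1-α)/α`, the cumulative functions of the
rescaled resolvent densities `ρ^n(x) = T_n ψ^n(T_n x) / ∫_0^∞ ψ^n` converge uniformly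
on `[0,1]` to `F^{α,λ}(t) = ∫_0^t f^{α,λ}`. -/
theorem resolvent_cdf_convergence (α K lam : ℝ) (hα : α ∈ Set.Ioo (0:ℝ) 1)
    (hK : 0 < K) (hlam : 0 < lam)
    (φ : ℝ → ℝ) (hmeas : Measurable φ) (hpos : ∀ x, 0 ≤ φ x)
    (hnorm : (∫ s in Set.Ioi (0:ℝ), φ s) = 1)
    (htail : Filter.Tendsto (fun x : ℝ => α * x ^ α * (1 - ∫ s in (0:ℝ)..x, φ s))
      Filter.atTop (nhds K))
    (T : ℕ → ℝ) (hT : Filter.Tendsto T Filter.atTop Filter.atTop)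
    (a : ℕ → ℝ) (ha : ∀ n, a n ∈ Set.Ioo (0:ℝ) 1)
    (hspeed : Filter.Tendsto (fun n => (T n) ^ α * (1 - a n)) Filter.atTop
      (nhds (lam * (K * Real.Gamma (1 - α) / α)))) :
    TendstoUniformlyOn
      (fun n t => ∫ x in (0:ℝ)..t,
        T n * (∑' k : ℕ, (a n) ^ (k + 1) * convPow φ k (T n * x))
          / ∫ s in Set.Ioi (0:ℝ), ∑' k : ℕ, (a n) ^ (k + 1) * convPow φ k s)
      (fun t => ∫ x in (0:ℝ)..t, falpha α lam x)
      Filter.atTop (Set.Icc 0 1) := by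
  -- Integers `j ≥ m` are the points where the Laplace transforms are compared.
  obtain ⟨m, hm1, hm⟩ : ∃ m : ℕ, 1 ≤ m ∧ ∀ j : ℕ, m ≤ j → lam < (j : ℝ) ^ α := by
    have h := ((tendsto_rpow_atTop hα.1).comp
      tendsto_natCast_atTop_atTop).eventually_gt_atTop lam
    obtain ⟨N, hN⟩ := eventually_atTop.1 h
    exact ⟨max N 1, le_max_right _ _, fun j hj => hN j ((le_max_left _ _).trans hj)⟩
  have hexp : ∀ (j : ℕ) (x : ℝ), Real.exp (-x) ^ j = Real.exp (-(j : ℝ) * x) := fun j x => by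
    rw [← Real.exp_nat_mul]; ring_nf
  have hj0 : ∀ k : ℕ, (0:ℝ) < ((k + m : ℕ) : ℝ) := fun k => by
    exact_mod_cast (by omega : 0 < k + m)
  have hM : ∀ n, 0 < ∫ s in Ioi (0:ℝ), resolventSeries φ (a n) s := fun n => by
    rw [integral_resolvent hpos hnorm (ha n)]
    exact div_pos (ha n).1 (sub_pos.2 (ha n).2)
  refine tendstoUniformlyOn_cdf (m := m)
    (r := fun n x => T n * resolventSeries φ (a n) (T n * x) /
      ∫ s in Ioi (0:ℝ), resolventSeries φ (a n) s) ?_ ?_ ?_ ?_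
  · filter_upwards [hT.eventually_gt_atTop 0] with n hn x hx
    exact div_nonneg (mul_nonneg hn.le (resolvent_nonneg hpos (ha n).1.le (mul_pos hn hx).le))
      (hM n).le
  · filter_upwards [hT.eventually_gt_atTop 0] with n hn
    refine Integrable.div_const (Integrable.const_mul ?_ _) _
    refine (integrableOn_Ioi_comp_mul_left_iff _ 0 hn).2 ?_
    rw [mul_zero]
    exact integrableOn_resolvent hpos hnorm (ha n)
  · simp only [hexp]
    exact integrableOn_exp_mul_falpha hα.1 hlam (by exact_mod_cast hm1) (hm m le_rfl)
  · intro k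
    simp only [hexp]
    have h1 : ∫ x in Ioi (0:ℝ), Real.exp (-((k + m : ℕ) : ℝ) * x) * falpha α lam x =
        lam / (lam + ((k + m : ℕ) : ℝ) ^ α) :=
      laplace_falpha hα.1 hlam (hj0 k) (hm _ (Nat.le_add_left m k))
    rw [h1]
    refine (tendsto_laplace_rescaled hα hK hlam hpos hnorm htail hT hspeed (hj0 k)).congr' ?_
    filter_upwards [hT.eventually_gt_atTop 0] with n hn
    exact (laplace_rescaled hpos hnorm (ha n) hn (hj0 k)).symm
end
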